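/- Let n ≥ 1 and let T₁, T₂ be n×n integer matrices with nonzero determinant. Write V(T) ⊆ ℤⁿ for the set consisting of the zero vector together with the n columns of T. Then there exist L ∈ GL_n(ℤ) and v ∈ ℤⁿ with V(T₁) = {L·x + v : x ∈ V(T₂)} if and only if there exist L ∈ GL_n(ℤ) and R ∈ 𝔓_n with T₁ = L·T₂·Rᵀ. -/

import Mathlib

open Matrix

/-- The matrix `P_{n,i}`: the identity matrix except that every entry of its
`i`-th column equals `-1`. -/
def Pmat {n : ℕ} (i : Fin n) : Matrix (Fin n) (Fin n) ℤ :=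
  Matrix.of fun j l => if l = i then -1 else if j = l then 1 else 0

/-- The permutation matrix of the permutation `σ`. -/
def permMat {n : ℕ} (σ : Equiv.Perm (Fin n)) : Matrix (Fin n) (Fin n) ℤ :=
  Matrix.of fun j l => if j = σ l then 1 else 0

/-- `𝔓_n`: the subgroup of `GL_n(ℤ)` (the group of units of the ring of `n × n`
integer matrices) generated by the permutation matrices together with the matrices
`P_{n,1}, …, P_{n,n}`, viewed as a set of integer matrices. -/
def frakP (n : ℕ) : Set (Matrix (Fin n) (Fin n) ℤ) :=
  (fun u : (Matrix (Fin n) (Fin n) ℤ)ˣ => (u : Matrix (Fin n) (Fin n) ℤ)) ''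
    (Subgroup.closure {u : (Matrix (Fin n) (Fin n) ℤ)ˣ |
      (∃ σ : Equiv.Perm (Fin n), (u : Matrix (Fin n) (Fin n) ℤ) = permMat σ) ∨
      (∃ i : Fin n, (u : Matrix (Fin n) (Fin n) ℤ) = Pmat i)} : Set _)

/-- `V(T)`: the set consisting of the zero vector together with the `n` columns
of the matrix `T`; the vertex set of the lattice simplex `Δ(T)`. -/
def vertexSet {n : ℕ} (T : Matrix (Fin n) (Fin n) ℤ) : Set (Fin n → ℤ) :=
  insert (0 : Fin n → ℤ) (Set.range fun j => Tᵀ j)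

/-!
Regard `T` as the list of its columns. On lists `x` of vectors, with the origin as additional
vertex, a permutation matrix reorders `x`, while `P_{n,i}` replaces `x i` by `0` and then subtracts
the old `x i` everywhere: it translates the vertex `x i` to the origin and the origin to `-x i`.
Hence every element of `𝔓_n` translates the vertex set. Conversely, if `V(x)` is a translate of
`V(y)`, some vertex of `y` is translated to the origin; the identity or a suitable `P_{n,i}` carries
out this translation, after which `x` and `y` have the same vertices, so that `x` is a reordering of
`y` because the vertices of `x` are distinct.
-/

section FrakP

variable {n : ℕ}

theorem permMat_eq_permMatrix (σ : Equiv.Perm (Fin n)) : permMat σ = σ⁻¹.permMatrix ℤ := by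
  ext j k
  simp [permMat, Equiv.Perm.permMatrix, PEquiv.toMatrix_apply, Equiv.symm_apply_eq]

theorem permMat_mul (σ τ : Equiv.Perm (Fin n)) : permMat σ * permMat τ = permMat (σ * τ) := by
  simp only [permMat_eq_permMatrix, _root_.mul_inv_rev, permMatrix_mul]

theorem permMat_one : permMat (1 : Equiv.Perm (Fin n)) = 1 := by
  rw [permMat_eq_permMatrix, inv_one, permMatrix_one]

theorem Pmat_mul_self (i : Fin n) : Pmat i * Pmat i = 1 := by
  ext j k
  by_cases hj : j = i <;> by_cases hk : k = i <;>
    simp [Pmat, mul_apply, one_apply, Finset.sum_ite, Finset.filter_eq', hj, hk, eq_comm (a := i)]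

theorem permMat_mem_frakP (σ : Equiv.Perm (Fin n)) : permMat σ ∈ frakP n :=
  ⟨⟨permMat σ, permMat σ⁻¹, by simp [permMat_mul, permMat_one],
    by simp [permMat_mul, permMat_one]⟩,
    Subgroup.subset_closure (.inl ⟨σ, rfl⟩), rfl⟩

theorem Pmat_mem_frakP (i : Fin n) : Pmat i ∈ frakP n :=
  ⟨⟨Pmat i, Pmat i, Pmat_mul_self i, Pmat_mul_self i⟩,
    Subgroup.subset_closure (.inr ⟨i, rfl⟩), rfl⟩

theorem one_mem_frakP : (1 : Matrix (Fin n) (Fin n) ℤ) ∈ frakP n :=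
  ⟨1, one_mem _, rfl⟩

theorem mul_mem_frakP {A B : Matrix (Fin n) (Fin n) ℤ} (hA : A ∈ frakP n) (hB : B ∈ frakP n) :
    A * B ∈ frakP n := by
  obtain ⟨u, hu, rfl⟩ := hA
  obtain ⟨w, hw, rfl⟩ := hB
  exact ⟨u * w, mul_mem hu hw, rfl⟩

end FrakP

/-- The vertex set of the (possibly degenerate) simplex with one vertex at the origin and the
remaining vertices listed by `x`. For the columns of a square matrix `T` it is `vertexSet T` by
definition. -/
def originVertices {ι M : Type*} [Zero M] (x : ι → M) : Set M :=
  insert 0 (Set.range x)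

section OriginVertices

open scoped Pointwise

variable {ι M N : Type*}

theorem zero_mem_originVertices [Zero M] (x : ι → M) : 0 ∈ originVertices x :=
  Set.mem_insert _ _

theorem originVertices_comp_of_surjective {κ : Type*} [Zero M] (x : ι → M) {g : κ → ι}
    (hg : Function.Surjective g) : originVertices (x ∘ g) = originVertices x :=
  congrArg (insert 0) (hg.range_comp x)

theorem image_originVertices {F : Type*} [Zero M] [Zero N] [FunLike F N M] [ZeroHomClass F N M]
    (f : F) (y : ι → N) : f '' originVertices y = originVertices (f ∘ y) := by
  rw [originVertices, Set.image_insert_eq, map_zero, ← Set.range_comp, originVertices]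

theorem insert_range_update [DecidableEq ι] (x : ι → M) (i : ι) (a : M) :
    insert (x i) (Set.range (Function.update x i a)) = insert a (Set.range x) := by
  ext p
  simp only [Set.mem_insert_iff, Set.mem_range, Function.update_apply]
  grind

theorem originVertices_update_sub [DecidableEq ι] [AddCommGroup M] (x : ι → M) (i : ι) :
    originVertices (fun j => Function.update x i 0 j - x i) = -x i +ᵥ originVertices x := by
  rw [originVertices, originVertices, ← insert_range_update x i 0, Set.vadd_set_insert,
    ← Set.image_vadd, ← Set.range_comp]
  simp [Function.comp_def, sub_eq_neg_add]

theorem exists_perm_eq_comp_of_range_subset [Finite ι] {x y : ι → M}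
    (hx : Function.Injective x) (h : Set.range x ⊆ Set.range y) :
    ∃ σ : Equiv.Perm ι, x = y ∘ σ := by
  obtain ⟨g, rfl⟩ := Set.range_subset_range_iff_exists_comp.mp h
  exact ⟨.ofBijective g (Finite.injective_iff_bijective.mp hx.of_comp), rfl⟩

theorem exists_perm_eq_comp_of_originVertices_eq [Finite ι] [Zero M] {x y : ι → M}
    (hx : Function.Injective x) (hx₀ : 0 ∉ Set.range x)
    (h : originVertices x = originVertices y) : ∃ σ : Equiv.Perm ι, x = y ∘ σ :=
  exists_perm_eq_comp_of_range_subset hx <|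
    (Set.subset_insert_iff_of_notMem hx₀).mp ((Set.subset_insert _ _).trans h.subset)

end OriginVertices

section Action

open scoped Pointwise Matrix.Module

variable {n : ℕ} {M : Type*} [AddCommGroup M]

theorem permMat_smul (σ : Equiv.Perm (Fin n)) (x : Fin n → M) : permMat σ • x = x ∘ ⇑σ⁻¹ := by
  ext j
  simp [permMat, ite_smul, ← Equiv.symm_apply_eq]

theorem Pmat_smul (i : Fin n) (x : Fin n → M) :
    Pmat i • x = fun j => Function.update x i 0 j - x i := by
  ext j
  have entry (k : Fin n) :
      Pmat i j k • x k = (if j = k then Function.update x i 0 j else 0) -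
        if k = i then x i else 0 := by
    simp only [Pmat, of_apply, Function.update_apply]
    split_ifs <;> simp_all
  simp [entry, Finset.sum_sub_distrib]

theorem originVertices_smul_mem_orbit {R : Matrix (Fin n) (Fin n) ℤ} (hR : R ∈ frakP n)
    (x : Fin n → M) : originVertices (R • x) ∈ AddAction.orbit M (originVertices x) := by
  obtain ⟨u, hu, rfl⟩ := hR
  change originVertices (u • x) ∈ _
  induction hu using Subgroup.closure_induction generalizing x with
  | mem u hu =>
    rcases hu with ⟨σ, hσ⟩ | ⟨i, hi⟩
    · rw [Units.smul_def, hσ, permMat_smul,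
        originVertices_comp_of_surjective x (Equiv.surjective _)]
      exact AddAction.mem_orbit_self _
    · rw [Units.smul_def, hi, Pmat_smul, originVertices_update_sub]
      exact AddAction.mem_orbit _ _
  | one => simpa only [one_smul] using AddAction.mem_orbit_self _
  | mul u w _ _ hu hw =>
    rw [mul_smul, ← AddAction.orbit_eq_iff.mpr (hw x)]
    exact hu (w • x)
  | inv u _ hu => simpa only [smul_inv_smul] using AddAction.mem_orbit_symm.mp (hu (u⁻¹ • x))

theorem exists_mem_frakP_originVertices_smul_eq {x : Fin n → M} {p : M}
    (hp : p ∈ originVertices x) :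
    ∃ R ∈ frakP n, originVertices (R • x) = -p +ᵥ originVertices x := by
  rcases hp with rfl | ⟨i, rfl⟩
  · exact ⟨1, one_mem_frakP, by rw [one_smul, neg_zero, zero_vadd]⟩
  · exact ⟨Pmat i, Pmat_mem_frakP i, by rw [Pmat_smul, originVertices_update_sub]⟩

theorem originVertices_mem_orbit_iff {x : Fin n → M} (hx : Function.Injective x)
    (hx₀ : 0 ∉ Set.range x) (y : Fin n → M) :
    originVertices x ∈ AddAction.orbit M (originVertices y) ↔ ∃ R ∈ frakP n, x = R • y := by
  refine ⟨?_, fun ⟨R, hR, h⟩ => h ▸ originVertices_smul_mem_orbit hR y⟩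
  rintro ⟨v, hv : v +ᵥ originVertices y = originVertices x⟩
  have hp : -v ∈ originVertices y := by
    simpa [← hv, Set.mem_vadd_set_iff_neg_vadd_mem] using zero_mem_originVertices x
  obtain ⟨R, hR, hRy⟩ := exists_mem_frakP_originVertices_smul_eq hp
  rw [neg_neg, hv] at hRy
  obtain ⟨σ, hσ⟩ := exists_perm_eq_comp_of_originVertices_eq hx hx₀ hRy.symm
  exact ⟨permMat σ⁻¹ * R, mul_mem_frakP (permMat_mem_frakP _) hR, by
    rw [mul_smul, permMat_smul, inv_inv, hσ]⟩

theorem vertexSet_unimodular_iff_general {N : Type*} [AddCommGroup N] (f : N →+ M)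
    {x : Fin n → M} (hx : Function.Injective x) (hx₀ : 0 ∉ Set.range x) (y : Fin n → N) :
    (∃ v, originVertices x = (fun p => f p + v) '' originVertices y) ↔
      ∃ R ∈ frakP n, ∀ j, x j = ∑ k, R j k • f (y k) := by
  have image_eq (v : M) :
      (fun p => f p + v) '' originVertices y = v +ᵥ originVertices (f ∘ y) := by
    rw [← image_originVertices, ← Set.image_vadd, Set.image_image]
    simp only [vadd_eq_add, add_comm]
  simp only [image_eq, eq_comm (a := originVertices x)]
  exact (originVertices_mem_orbit_iff hx hx₀ (f ∘ y)).trans <| by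
    simp only [funext_iff, Matrix.Module.smul_apply, Function.comp_apply]

end Action

theorem eq_mul_transpose_iff_col_eq_sum {l m k α : Type*} [Fintype k] [CommSemiring α]
    {A : Matrix m l α} {B : Matrix m k α} {C : Matrix l k α} :
    A = B * Cᵀ ↔ ∀ j, A.col j = ∑ i, C j i • B.col i := by
  simp only [← Matrix.ext_iff, funext_iff, mul_apply, transpose_apply, col_apply,
    Finset.sum_apply, Pi.smul_apply, smul_eq_mul, mul_comm (C _ _)]
  exact forall_comm

/-- The lattice simplices `Δ(T₁)` and `Δ(T₂)` are unimodularly equivalent as unordered,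
unoriented simplices (some affine map `x ↦ Lx + v` with `L ∈ GL_n(ℤ)`, `v ∈ ℤⁿ` maps one
vertex set onto the other) iff `T₁ = L · T₂ · Rᵀ` for some `L ∈ GL_n(ℤ)` and `R ∈ 𝔓_n`. -/
theorem vertexSet_unimodular_iff
    (n : ℕ) (hn : 1 ≤ n) (T₁ T₂ : Matrix (Fin n) (Fin n) ℤ)
    (h₁ : T₁.det ≠ 0) (h₂ : T₂.det ≠ 0) :
    (∃ (L : Matrix (Fin n) (Fin n) ℤ) (v : Fin n → ℤ), (L.det = 1 ∨ L.det = -1) ∧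
        vertexSet T₁ = (fun x => L.mulVec x + v) '' vertexSet T₂) ↔
    (∃ L : Matrix (Fin n) (Fin n) ℤ, (L.det = 1 ∨ L.det = -1) ∧
        ∃ R ∈ frakP n, T₁ = L * T₂ * Rᵀ) := by
  have hT := linearIndependent_cols_of_det_ne_zero h₁
  refine exists_congr fun L => exists_and_left.trans <| and_congr_right' ?_
  simp only [eq_mul_transpose_iff_col_eq_sum]
  exact vertexSet_unimodular_iff_general L.mulVecLin.toAddMonoidHom hT.injective
    (fun ⟨j, hj⟩ => hT.ne_zero j hj) T₂.col
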